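/- Modified energy conservation of Scheme-3 (Theorem 2.1, case Scheme-3). Suppose f^n, f^{n+1} are phase-space functions and E^{n−1/2}, E^n, E^{n+1/2}, E^{n+1}, E^{n+3/2}, B^n, B^{n+1} are spatial vector fields satisfying: E^n = E^{n−1/2} + (Δt/2)(∇×B^n − J^n); E^{n+1/2} = E^n + (Δt/2)(∇×B^n − J^n), where J^m(x) = ∫_Ωv f^m(x,v) v dv for m = n, n+1; B^{n+1} = B^n − Δt ∇×E^{n+1/2}; (f^{n+1} − f^n)/Δt + v·∇_x ((f^n + f^{n+1})/2) + (E^{n+1/2} + v×(B^n + B^{n+1})/2)·∇_v ((f^n + f^{n+1})/2) = 0; E^{n+1} = E^{n+1/2} + (Δt/2)(∇×B^{n+1} − J^{n+1}); and E^{n+3/2} = E^{n+1} + (Δt/2)(∇×B^{n+1} − J^{n+1}). Then the modified discrete total energy is conserved: ∫_Ωx ∫_Ωv f^{n+1} |v|² dv dx + ∫_Ωx (|B^{n+1}|² + E^{n+1/2}·E^{n+3/2}) dx = ∫_Ωx ∫_Ωv f^n |v|² dv dx + ∫_Ωx (|B^n|² + E^{n−1/2}·E^{n+1/2}) dx. 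-/

import Mathlib

open MeasureTheory Matrix

noncomputable section

/-- Points of `ℝ³`. -/
abbrev V3 : Type := Fin 3 → ℝ

/-- Partial derivative in the `i`-th coordinate direction. -/
def pd (i : Fin 3) (g : V3 → ℝ) (x : V3) : ℝ := fderiv ℝ g x (Pi.single i 1)

/-- Curl of a vector field on `ℝ³`. -/
def curl (U : V3 → V3) (x : V3) : V3 :=
  ![pd 1 (fun y => U y 2) x - pd 2 (fun y => U y 1) x,
    pd 2 (fun y => U y 0) x - pd 0 (fun y => U y 2) x,
    pd 0 (fun y => U y 1) x - pd 1 (fun y => U y 0) x]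

/-- Gradient in the `x`-variable of a phase-space function. -/
def gradX (f : V3 → V3 → ℝ) (x v : V3) : V3 :=
  fun i => fderiv ℝ (fun y => f y v) x (Pi.single i 1)

/-- Gradient in the `v`-variable of a phase-space function. -/
def gradV (f : V3 → V3 → ℝ) (x v : V3) : V3 :=
  fun i => fderiv ℝ (fun w => f x w) v (Pi.single i 1)

/-- The period box `[0,L]³`. -/
def box (L : ℝ) : Set V3 := Set.Icc 0 (fun _ => L)

/-- A spatial vector field: smooth and `L`-periodic. -/
def IsSpatialVF (L : ℝ) (U : V3 → V3) : Prop :=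
  ContDiff ℝ (⊤ : ℕ∞) U ∧ ∀ (x : V3) (i : Fin 3), U (x + L • (Pi.single i (1:ℝ) : V3)) = U x

/-- A phase-space function: smooth, `L`-periodic in `x`, compactly supported in `v`
(uniformly in `x`). -/
def IsPhase (L : ℝ) (f : V3 → V3 → ℝ) : Prop :=
  ContDiff ℝ (⊤ : ℕ∞) (fun p : V3 × V3 => f p.1 p.2) ∧
  (∀ (x v : V3) (i : Fin 3), f (x + L • (Pi.single i (1:ℝ) : V3)) v = f x v) ∧
  ∃ R : ℝ, ∀ (x v : V3), R ≤ ‖v‖ → f x v = 0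

/-- Current density `J(x) = ∫ f(x,v) v dv`. -/
def Jcur (f : V3 → V3 → ℝ) (x : V3) : V3 := ∫ v : V3, f x v • v

/-- Kinetic energy `∫_Ωx ∫_Ωv f |v|² dv dx`. -/
def kinE (L : ℝ) (f : V3 → V3 → ℝ) : ℝ :=
  ∫ x in box L, ∫ v : V3, f x v * (v ⬝ᵥ v)

/-- Field energy `∫_Ωx |U|² dx`. -/
def fieldE (L : ℝ) (U : V3 → V3) : ℝ := ∫ x in box L, U x ⬝ᵥ U x

/-!
Write `g` for the average of `f0` and `f1`. Multiplying the Vlasov equation by `|v|²` and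
integrating over phase space kills the transport term, a divergence in the periodic variable `x`.
The force `E + v × B` is divergence free in `v` and `v · (v × B) = 0`, so integrating by parts in
`v` turns the force term into `-2 ∫ E · J_g`, and the kinetic energy grows by
`Δt ∫ Eh · (J0 + J1)`. The two half-steps for `E` around each integer time add up to full leapfrog
steps, for which the modified field energy density changes by `-Δt` times
`curl Eh · (Bn + B1) - Eh · curl (Bn + B1) + Eh · (J0 + J1)`; the first two terms are
`div (Eh × (Bn + B1))`, with zero integral over the period box, and the last cancels the kinetic
gain.
-/

section DifferentialOperators

variable {ι : Type*} [DecidableEq ι]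

/-- The vector of partial derivatives of a scalar field on `ι → ℝ`. It is defined by coordinates,
as `gradient` needs an inner product space and `ι → ℝ` carries the sup norm. -/
def grad (φ : (ι → ℝ) → ℝ) (x : ι → ℝ) : ι → ℝ :=
  fun i => fderiv ℝ φ x (Pi.single i 1)

theorem grad_mul [Finite ι] {φ ψ : (ι → ℝ) → ℝ} {x : ι → ℝ}
    (hφ : DifferentiableAt ℝ φ x) (hψ : DifferentiableAt ℝ ψ x) :
    grad (fun y => φ y * ψ y) x = φ x • grad ψ x + ψ x • grad φ x := by
  have := Fintype.ofFinite ι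
  ext i
  simp [grad, fderiv_fun_mul hφ hψ]

variable [Fintype ι]

/-- The divergence of a vector field on `ι → ℝ`, the integrand of the divergence theorem. -/
def divergence (U : (ι → ℝ) → ι → ℝ) (x : ι → ℝ) : ℝ :=
  ∑ i, grad (fun y => U y i) x i

theorem grad_dotProduct_self (x : ι → ℝ) :
    grad (fun y : ι → ℝ => y ⬝ᵥ y) x = (2 : ℝ) • x := by
  have hcoord (j : ι) : HasFDerivAt (fun y : ι → ℝ => y j * y j)
      (x j • ContinuousLinearMap.proj (R := ℝ) j + x j • ContinuousLinearMap.proj j) x :=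
    (hasFDerivAt_apply j x).mul (hasFDerivAt_apply j x)
  have hsum := (HasFDerivAt.fun_sum fun j (_ : j ∈ Finset.univ) => hcoord j).fderiv
  ext i
  simp [grad, dotProduct, hsum, Pi.single_apply, Finset.sum_add_distrib, two_mul]

theorem divergence_smul {φ : (ι → ℝ) → ℝ} {U : (ι → ℝ) → ι → ℝ} {x : ι → ℝ}
    (hφ : DifferentiableAt ℝ φ x) (hU : DifferentiableAt ℝ U x) :
    divergence (fun y => φ y • U y) x = φ x * divergence U x + grad φ x ⬝ᵥ U x := by
  have hUi := differentiableAt_pi.1 hU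
  simp only [divergence, Pi.smul_apply, smul_eq_mul, grad_mul hφ (hUi _), Pi.add_apply,
    Finset.sum_add_distrib, Finset.mul_sum, dotProduct, mul_comm]

theorem divergence_const (c x : ι → ℝ) : divergence (fun _ => c) x = 0 := by
  simp [divergence, grad]

theorem continuous_grad {φ : (ι → ℝ) → ℝ} (hφ : ContDiff ℝ 1 φ) : Continuous (grad φ) :=
  continuous_pi fun _ => (hφ.continuous_fderiv one_ne_zero).clm_apply continuous_const

theorem continuous_divergence {U : (ι → ℝ) → ι → ℝ} (hU : ContDiff ℝ 1 U) :
    Continuous (divergence U) :=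
  continuous_finsetSum _ fun i _ =>
    (continuous_apply i).comp (continuous_grad (contDiff_pi.1 hU i))

end DifferentialOperators

section DivergenceTheorem

theorem setIntegral_Icc_divergence_eq_zero_of_periodic {n : ℕ} {a c : Fin (n + 1) → ℝ}
    (hc : 0 ≤ c) {U : (Fin (n + 1) → ℝ) → Fin (n + 1) → ℝ} (hU : ContDiff ℝ 1 U)
    (hper : ∀ i, Function.Periodic (fun x => U x i) (Pi.single i (c i))) :
    ∫ x in Set.Icc a (a + c), divergence U x = 0 := by
  have hUi := contDiff_pi.1 hU
  have faces_cancel (i : Fin (n + 1)) (y : Fin n → ℝ) :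
      U (i.insertNth ((a + c) i) y) i = U (i.insertNth (a i) y) i := by
    refine Eq.trans ?_ (hper i (i.insertNth (a i) y))
    dsimp only
    congr 1
    ext j
    rcases Fin.eq_self_or_eq_succAbove i j with rfl | ⟨k, rfl⟩ <;> simp
  refine (integral_divergence_of_hasFDerivAt_off_countable' a (a + c)
    (le_add_of_nonneg_right hc) (fun i x => U x i) (fun i => fderiv ℝ fun x => U x i) ∅
    Set.countable_empty (fun i => (hUi i).continuous.continuousOn)
    (fun x _ i => ((hUi i).differentiable one_ne_zero x).hasFDerivAt)
    (continuous_divergence hU).integrableOn_Icc).trans ?_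
  simp only [faces_cancel, sub_self, Finset.sum_const_zero]

theorem integral_divergence_eq_zero_of_hasCompactSupport {ι : Type*} [Fintype ι] [DecidableEq ι]
    {U : (ι → ℝ) → ι → ℝ} (hU : ContDiff ℝ 1 U) (hs : HasCompactSupport U) :
    ∫ x, divergence U x = 0 := by
  have hUi := contDiff_pi.1 hU
  have hsi (i : ι) : HasCompactSupport fun x => U x i :=
    hs.comp_left (g := fun u : ι → ℝ => u i) rfl
  have hint (i : ι) : Integrable fun x => grad (fun y => U y i) x i :=
    ((continuous_apply i).comp (continuous_grad (hUi i))).integrable_of_hasCompactSupport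
      ((hsi i).fderiv_apply ℝ _)
  have hzero (i : ι) : ∫ x, grad (fun y => U y i) x i = 0 := by
    simpa [grad] using integral_mul_fderiv_eq_neg_fderiv_mul_of_integrable
      (μ := (volume : Measure (ι → ℝ))) (f := fun _ => (1 : ℝ)) (g := fun y => U y i)
      (v := Pi.single i 1) (by simp) (by simpa [grad] using hint i)
      (by simpa using (hUi i).continuous.integrable_of_hasCompactSupport (hsi i))
      (fun _ _ => differentiableAt_const _) (fun x _ => (hUi i).differentiable one_ne_zero x)
  simp only [divergence, integral_finsetSum _ fun i _ => hint i, hzero, Finset.sum_const_zero]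

end DivergenceTheorem

section ParametricIntegrals

theorem dotProduct_integral {α ι : Type*} [MeasurableSpace α] {μ : Measure α} [Fintype ι]
    (a : ι → ℝ) {F : α → ι → ℝ} (hF : Integrable F μ) :
    a ⬝ᵥ ∫ t, F t ∂μ = ∫ t, a ⬝ᵥ F t ∂μ := by
  have hFi (i : ι) : Integrable (fun t => F t i) μ := hF.eval i
  simp only [dotProduct, integral_finsetSum _ fun i _ => (hFi i).const_mul (a i),
    integral_const_mul, eval_integral hFi]

variable {X Y E : Type*} [TopologicalSpace X] [TopologicalSpace Y] [MeasurableSpace Y]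
  [NormedAddCommGroup E] [NormedSpace ℝ E] {ν : Measure Y}
  {F : X → Y → E} {K : Set Y}

theorem continuous_integral_of_support_subset_isCompact [FirstCountableTopology X]
    [LocallyCompactSpace X] [OpensMeasurableSpace Y] [SecondCountableTopologyEither Y E]
    [IsLocallyFiniteMeasure ν]
    (hF : Continuous (Function.uncurry F)) (hK : IsCompact K) (hFK : ∀ x, ∀ y ∉ K, F x y = 0) :
    Continuous fun x => ∫ y, F x y ∂ν := by
  simpa only [setIntegral_eq_integral_of_forall_compl_eq_zero (hFK _)] using
    continuous_parametric_integral_of_continuous (μ := ν) hF hK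

theorem setIntegral_integral_swap_of_support_subset_isCompact [MeasurableSpace X]
    [OpensMeasurableSpace (X × Y)] [T2Space (X × Y)] [SecondCountableTopologyEither (X × Y) E]
    {μ : Measure X} [SFinite μ] [SFinite ν] [IsFiniteMeasureOnCompacts (μ.prod ν)]
    (hF : Continuous (Function.uncurry F)) {s : Set X} (hs : IsCompact s) (hK : IsCompact K)
    (hFK : ∀ x, ∀ y ∉ K, F x y = 0) :
    ∫ x in s, ∫ y, F x y ∂ν ∂μ = ∫ y, ∫ x in s, F x y ∂μ ∂ν := by
  have hFK' : ∀ y ∉ K, ∫ x in s, F x y ∂μ = 0 := fun y hy => by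
    simp only [hFK _ y hy, integral_zero]
  have hint : Integrable (Function.uncurry F) ((μ.restrict s).prod (ν.restrict K)) := by
    rw [Measure.prod_restrict]
    exact hF.continuousOn.integrableOn_compact (hs.prod hK)
  simpa only [setIntegral_eq_integral_of_forall_compl_eq_zero (hFK _),
    setIntegral_eq_integral_of_forall_compl_eq_zero hFK'] using integral_integral_swap hint

end ParametricIntegrals

section VectorCalculus

theorem divergence_cross {U W : V3 → V3} {x : V3}
    (hU : DifferentiableAt ℝ U x) (hW : DifferentiableAt ℝ W x) :
    divergence (fun y => U y ⨯₃ W y) x = curl U x ⬝ᵥ W x - U x ⬝ᵥ curl W x := by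
  have hUi := differentiableAt_pi.1 hU
  have hWi := differentiableAt_pi.1 hW
  have grad_mul_sub_mul (i j k : Fin 3) :
      grad (fun y => U y j * W y k - U y k * W y j) x i
        = U x j * pd i (fun y => W y k) x + W x k * pd i (fun y => U y j) x
          - (U x k * pd i (fun y => W y j) x + W x j * pd i (fun y => U y k) x) := by
    rw [grad, fderiv_fun_sub ((hUi j).fun_mul (hWi k)) ((hUi k).fun_mul (hWi j)),
      fderiv_fun_mul (hUi j) (hWi k), fderiv_fun_mul (hUi k) (hWi j)]
    rfl
  simp only [divergence, cross_apply, curl, dotProduct, Fin.sum_univ_three, Matrix.cons_val,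
    grad_mul_sub_mul]
  ring

theorem hasFDerivAt_add_cross (a b v : V3) :
    HasFDerivAt (fun w : V3 => a + w ⨯₃ b) (crossProduct.flip b).toContinuousLinearMap v :=
  (crossProduct.flip b).toContinuousLinearMap.hasFDerivAt.const_add a

theorem contDiff_add_cross (a b : V3) {n : WithTop ℕ∞} : ContDiff ℝ n fun v : V3 => a + v ⨯₃ b :=
  contDiff_const.add (crossProduct.flip b).toContinuousLinearMap.contDiff

theorem divergence_add_cross (a b v : V3) : divergence (fun w => a + w ⨯₃ b) v = 0 := by
  refine Finset.sum_eq_zero fun i _ => ?_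
  rw [grad, (hasFDerivAt_pi'.1 (hasFDerivAt_add_cross a b v) i).fderiv]
  simpa using dot_self_cross (Pi.single i 1) b

theorem continuous_curl {U : V3 → V3} (hU : ContDiff ℝ 1 U) : Continuous (curl U) := by
  have hpd (i j : Fin 3) : Continuous (pd i fun y => U y j) :=
    (continuous_apply i).comp (continuous_grad (contDiff_pi.1 hU j))
  refine continuous_pi fun k => ?_
  fin_cases k <;> exact (hpd _ _).sub (hpd _ _)

theorem divergence_mul_dotProduct_self_smul_add_cross {g : V3 → ℝ} {v : V3}
    (hg : DifferentiableAt ℝ g v) (a b : V3) :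
    divergence (fun w => (g w * (w ⬝ᵥ w)) • (a + w ⨯₃ b)) v
      = ((a + v ⨯₃ b) ⬝ᵥ grad g v) * (v ⬝ᵥ v) + 2 * (g v * (a ⬝ᵥ v)) := by
  have hsq : DifferentiableAt ℝ (fun w : V3 => w ⬝ᵥ w) v := by
    unfold dotProduct; fun_prop
  have hforce := (hasFDerivAt_add_cross a b v).differentiableAt
  have force_dot_velocity : v ⬝ᵥ (a + v ⨯₃ b) = a ⬝ᵥ v := by
    rw [dotProduct_add, dot_self_cross, add_zero, dotProduct_comm]
  rw [divergence_smul (hg.fun_mul hsq) hforce, divergence_add_cross, grad_mul hg hsq,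
    grad_dotProduct_self, add_dotProduct, smul_dotProduct, smul_dotProduct, smul_dotProduct,
    force_dot_velocity, dotProduct_comm (grad g v)]
  simp only [smul_eq_mul]
  ring

theorem integrable_add_cross_dotProduct_grad_mul_dotProduct_self {g : V3 → ℝ}
    (hg : ContDiff ℝ 1 g) (hs : HasCompactSupport g) (a b : V3) :
    Integrable fun v => ((a + v ⨯₃ b) ⬝ᵥ grad g v) * (v ⬝ᵥ v) := by
  have hforce : Continuous fun v : V3 => a + v ⨯₃ b :=
    (contDiff_add_cross a b (n := 1)).continuous
  have hgrad_zero (v : V3) (hv : v ∉ tsupport g) : grad g v = 0 := by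
    ext i
    simp [grad, fderiv_of_notMem_tsupport ℝ hv]
  refine Continuous.integrable_of_hasCompactSupport
    ((hforce.dotProduct (continuous_grad hg)).mul (continuous_id.dotProduct continuous_id))
    (HasCompactSupport.intro hs fun v hv => ?_)
  rw [hgrad_zero v hv, dotProduct_zero, zero_mul]

theorem integral_add_cross_dotProduct_grad_mul_dotProduct_self {g : V3 → ℝ} (hg : ContDiff ℝ 1 g)
    (hs : HasCompactSupport g) (a b : V3) :
    ∫ v, ((a + v ⨯₃ b) ⬝ᵥ grad g v) * (v ⬝ᵥ v) = -2 * (a ⬝ᵥ ∫ v, g v • v) := by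
  have hsq : ContDiff ℝ 1 fun v : V3 => v ⬝ᵥ v := by
    unfold dotProduct; fun_prop
  have hmoment : Integrable fun v => g v • v :=
    (hg.continuous.smul continuous_id).integrable_of_hasCompactSupport hs.smul_right
  have hpower : Integrable fun v => g v * (a ⬝ᵥ v) :=
    (hg.continuous.mul (continuous_const.dotProduct
      continuous_id)).integrable_of_hasCompactSupport hs.mul_right
  have hflux := integral_divergence_eq_zero_of_hasCompactSupport ((hg.mul hsq).smul
    (contDiff_add_cross a b)) hs.mul_right.smul_right
  have hbalance :
      (∫ v, ((a + v ⨯₃ b) ⬝ᵥ grad g v) * (v ⬝ᵥ v)) + 2 * ∫ v, g v * (a ⬝ᵥ v) = 0 := by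
    rw [← integral_const_mul, ← hflux, ← integral_add
      (integrable_add_cross_dotProduct_grad_mul_dotProduct_self hg hs a b) (hpower.const_mul 2)]
    congr with v : 1
    exact (divergence_mul_dotProduct_self_smul_add_cross (hg.differentiable one_ne_zero v) a b).symm
  rw [dotProduct_integral a hmoment]
  simp only [dotProduct_smul, smul_eq_mul]
  linarith

end VectorCalculus

section MaxwellStep

/-- A periodic spatial vector field of class `C¹` (the regularity the energy balance needs). -/
structure IsC1SpatialVF (L : ℝ) (U : V3 → V3) : Prop where
  contDiff : ContDiff ℝ 1 U
  periodic : ∀ i, Function.Periodic U (Pi.single i L)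

theorem IsC1SpatialVF.cross {L : ℝ} {U W : V3 → V3} (hU : IsC1SpatialVF L U)
    (hW : IsC1SpatialVF L W) : IsC1SpatialVF L fun x => U x ⨯₃ W x where
  contDiff := by
    have hUi := contDiff_pi.1 hU.contDiff
    have hWi := contDiff_pi.1 hW.contDiff
    refine contDiff_pi.2 fun k => ?_
    simp only [cross_apply]
    fin_cases k <;> exact ((hUi _).mul (hWi _)).sub ((hUi _).mul (hWi _))
  periodic i x := by simp only [hU.periodic i x, hW.periodic i x]

theorem setIntegral_box_divergence {L : ℝ} (hL : 0 ≤ L) {U : V3 → V3} (hU : IsC1SpatialVF L U) :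
    ∫ x in box L, divergence U x = 0 := by
  have hbox := setIntegral_Icc_divergence_eq_zero_of_periodic (a := 0) (c := fun _ => L)
    (fun _ => hL) hU.contDiff fun i x => congrFun (hU.periodic i x) i
  rwa [zero_add] at hbox

theorem setIntegral_box_curl_dotProduct_sub {L : ℝ} (hL : 0 ≤ L) {U W : V3 → V3}
    (hU : IsC1SpatialVF L U) (hW : IsC1SpatialVF L W) :
    ∫ x in box L, (curl U x ⬝ᵥ W x - U x ⬝ᵥ curl W x) = 0 := by
  simpa only [divergence_cross (hU.contDiff.differentiable one_ne_zero _)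
    (hW.contDiff.differentiable one_ne_zero _)] using setIntegral_box_divergence hL (hU.cross hW)

theorem integrableOn_box {E : Type*} [NormedAddCommGroup E] {φ : V3 → E} (hφ : Continuous φ)
    (L : ℝ) : IntegrableOn φ (box L) :=
  hφ.integrableOn_Icc

theorem leapfrog_energyDensity_sub {ι : Type*} [Fintype ι] {Δt : ℝ}
    {Em Eh Et B0 B1 J0 J1 curlE curlB0 curlB1 : ι → ℝ}
    (ampere0 : Eh = Em + Δt • (curlB0 - J0)) (faraday : B1 = B0 - Δt • curlE)
    (ampere1 : Et = Eh + Δt • (curlB1 - J1)) :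
    (B1 ⬝ᵥ B1 + Eh ⬝ᵥ Et) - (B0 ⬝ᵥ B0 + Em ⬝ᵥ Eh)
      = -Δt * ((curlE ⬝ᵥ B0 - Eh ⬝ᵥ curlB0) + (curlE ⬝ᵥ B1 - Eh ⬝ᵥ curlB1)
        + Eh ⬝ᵥ (J0 + J1)) := by
  have magnetic : B1 ⬝ᵥ B1 - B0 ⬝ᵥ B0 = -Δt * (curlE ⬝ᵥ (B0 + B1)) := by
    have increment : -Δt • curlE = B1 - B0 := by rw [faraday]; module
    rw [← smul_eq_mul, ← smul_dotProduct, increment, sub_dotProduct, dotProduct_add,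
      dotProduct_add, dotProduct_comm B1 B0]
    ring
  have electric : Eh ⬝ᵥ Et - Em ⬝ᵥ Eh
      = Δt * (Eh ⬝ᵥ curlB0 + Eh ⬝ᵥ curlB1 - Eh ⬝ᵥ (J0 + J1)) := by
    have increment : Et - Em = Δt • (curlB0 + curlB1 - (J0 + J1)) := by
      rw [ampere1, ampere0]; module
    rw [dotProduct_comm Em, ← dotProduct_sub, increment, dotProduct_smul, dotProduct_sub,
      dotProduct_add, smul_eq_mul]
  rw [dotProduct_add] at magnetic
  linear_combination magnetic + electric

theorem leapfrog_fieldEnergy_balance {L : ℝ} (hL : 0 ≤ L) (Δt : ℝ)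
    {Em Eh Et B0 B1 J0 J1 : V3 → V3}
    (hEh : IsC1SpatialVF L Eh) (hB0 : IsC1SpatialVF L B0) (hB1 : IsC1SpatialVF L B1)
    (hJ0 : Continuous J0) (hJ1 : Continuous J1)
    (ampere0 : ∀ x, Eh x = Em x + Δt • (curl B0 x - J0 x))
    (faraday : ∀ x, B1 x = B0 x - Δt • curl Eh x)
    (ampere1 : ∀ x, Et x = Eh x + Δt • (curl B1 x - J1 x)) :
    (∫ x in box L, (B1 x ⬝ᵥ B1 x + Eh x ⬝ᵥ Et x))
        - ∫ x in box L, (B0 x ⬝ᵥ B0 x + Em x ⬝ᵥ Eh x)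
      = -Δt * ∫ x in box L, Eh x ⬝ᵥ (J0 x + J1 x) := by
  have cEh := hEh.contDiff.continuous
  have cB0 := hB0.contDiff.continuous
  have cB1 := hB1.contDiff.continuous
  have ccurlE := continuous_curl hEh.contDiff
  have ccurl0 := continuous_curl hB0.contDiff
  have ccurl1 := continuous_curl hB1.contDiff
  have hEm : Em = fun x => Eh x - Δt • (curl B0 x - J0 x) :=
    funext fun x => by rw [ampere0 x, add_sub_cancel_right]
  have cEm : Continuous Em := hEm ▸ cEh.sub ((ccurl0.sub hJ0).const_smul Δt)
  have cEt : Continuous Et := funext ampere1 ▸ cEh.add ((ccurl1.sub hJ1).const_smul Δt)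
  have cflux0 : Continuous fun x => curl Eh x ⬝ᵥ B0 x - Eh x ⬝ᵥ curl B0 x :=
    (ccurlE.dotProduct cB0).sub (cEh.dotProduct ccurl0)
  have cflux1 : Continuous fun x => curl Eh x ⬝ᵥ B1 x - Eh x ⬝ᵥ curl B1 x :=
    (ccurlE.dotProduct cB1).sub (cEh.dotProduct ccurl1)
  rw [← integral_sub (integrableOn_box ((cB1.dotProduct cB1).fun_add (cEh.dotProduct cEt)) L)
      (integrableOn_box ((cB0.dotProduct cB0).fun_add (cEm.dotProduct cEh)) L)]
  simp only [leapfrog_energyDensity_sub (ampere0 _) (faraday _) (ampere1 _), integral_const_mul]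
  rw [integral_add (integrableOn_box (cflux0.fun_add cflux1) L)
      (integrableOn_box (cEh.dotProduct (hJ0.fun_add hJ1)) L),
    integral_add (integrableOn_box cflux0 L) (integrableOn_box cflux1 L),
    setIntegral_box_curl_dotProduct_sub hL hEh hB0, setIntegral_box_curl_dotProduct_sub hL hEh hB1,
    zero_add, zero_add]

end MaxwellStep

section VlasovStep

/-- A phase-space function of class `C¹`: periodic in `x`, with velocity support in one compact set
(the regularity the energy balance needs). -/
structure IsC1Phase (L : ℝ) (f : V3 → V3 → ℝ) : Prop where
  contDiff : ContDiff ℝ 1 (Function.uncurry f)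
  periodic : ∀ v i, Function.Periodic (fun x => f x v) (Pi.single i L)
  exists_isCompact : ∃ K, IsCompact K ∧ ∀ x, ∀ v ∉ K, f x v = 0

/-- The spatial transport term `v · ∇ₓ f` of the Vlasov equation, weighted by `|v|²` as in the
kinetic energy balance. -/
def energyTransport (f : V3 → V3 → ℝ) (x v : V3) : ℝ := (v ⬝ᵥ gradX f x v) * (v ⬝ᵥ v)

namespace IsC1Phase

variable {L : ℝ} {f f0 f1 : V3 → V3 → ℝ}

theorem midpoint (hf0 : IsC1Phase L f0) (hf1 : IsC1Phase L f1) :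
    IsC1Phase L fun x v => (f0 x v + f1 x v) / 2 where
  contDiff := (hf0.contDiff.add hf1.contDiff).div_const 2
  periodic v i x := by simp only [hf0.periodic v i x, hf1.periodic v i x]
  exists_isCompact := by
    obtain ⟨K0, hK0, h0⟩ := hf0.exists_isCompact
    obtain ⟨K1, hK1, h1⟩ := hf1.exists_isCompact
    refine ⟨K0 ∪ K1, hK0.union hK1, fun x v hv => ?_⟩
    rw [Set.mem_union, not_or] at hv
    rw [h0 x v hv.1, h1 x v hv.2, add_zero, zero_div]

theorem contDiff_position (hf : IsC1Phase L f) (v : V3) : ContDiff ℝ 1 fun x => f x v :=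
  hf.contDiff.comp (contDiff_prodMk_left v)

theorem contDiff_velocity (hf : IsC1Phase L f) (x : V3) : ContDiff ℝ 1 (f x) :=
  hf.contDiff.comp (contDiff_prodMk_right x)

theorem hasCompactSupport_velocity (hf : IsC1Phase L f) (x : V3) : HasCompactSupport (f x) := by
  obtain ⟨K, hK, hfK⟩ := hf.exists_isCompact
  exact HasCompactSupport.intro hK (hfK x)

theorem continuous_gradX (hf : IsC1Phase L f) : Continuous (Function.uncurry (gradX f)) := by
  have hswap : ContDiff ℝ 1 (Function.uncurry fun (p : V3 × V3) (y : V3) => f y p.2) :=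
    hf.contDiff.comp (contDiff_snd.prodMk (contDiff_snd.comp contDiff_fst))
  exact continuous_pi fun i =>
    (Continuous.fderiv hswap continuous_fst le_rfl).clm_apply continuous_const

section Moments

variable {E : Type*} [NormedAddCommGroup E] [NormedSpace ℝ E] {w : V3 → E}

theorem integrable_smul (hf : IsC1Phase L f) (hw : Continuous w) (x : V3) :
    Integrable fun v => f x v • w v :=
  ((hf.contDiff_velocity x).continuous.smul hw).integrable_of_hasCompactSupport
    (hf.hasCompactSupport_velocity x).smul_right

theorem continuous_integral_smul (hf : IsC1Phase L f) (hw : Continuous w) :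
    Continuous fun x => ∫ v, f x v • w v := by
  obtain ⟨K, hK, hfK⟩ := hf.exists_isCompact
  exact continuous_integral_of_support_subset_isCompact
    (hf.contDiff.continuous.smul (hw.comp continuous_snd)) hK
    fun x v hv => by rw [hfK x v hv, zero_smul]

end Moments

theorem continuous_Jcur (hf : IsC1Phase L f) : Continuous (Jcur f) :=
  hf.continuous_integral_smul continuous_id

theorem Jcur_midpoint (hf0 : IsC1Phase L f0) (hf1 : IsC1Phase L f1) (x : V3) :
    Jcur (fun y v => (f0 y v + f1 y v) / 2) x = (2 : ℝ)⁻¹ • (Jcur f0 x + Jcur f1 x) := by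
  unfold Jcur
  have hint {f} (hf : IsC1Phase L f) : Integrable fun v => f x v • v :=
    hf.integrable_smul continuous_id x
  rw [← integral_add (hint hf0) (hint hf1), ← integral_smul]
  congr with v : 1
  module

theorem kinE_sub (hf0 : IsC1Phase L f0) (hf1 : IsC1Phase L f1) :
    kinE L f1 - kinE L f0 = ∫ x in box L, ∫ v, (f1 x v - f0 x v) * (v ⬝ᵥ v) := by
  have hsq : Continuous fun v : V3 => v ⬝ᵥ v := continuous_id.dotProduct continuous_id
  have hint {f} (hf : IsC1Phase L f) (x : V3) : Integrable fun v => f x v * (v ⬝ᵥ v) :=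
    hf.integrable_smul hsq x
  have hdensity {f} (hf : IsC1Phase L f) :
      IntegrableOn (fun x => ∫ v, f x v * (v ⬝ᵥ v)) (box L) :=
    integrableOn_box (hf.continuous_integral_smul hsq) L
  simp only [kinE, ← integral_sub (hdensity hf1) (hdensity hf0),
    ← integral_sub (hint hf1 _) (hint hf0 _), sub_mul]

theorem setIntegral_box_dotProduct_gradX (hf : IsC1Phase L f) (hL : 0 ≤ L) (v : V3) :
    ∫ x in box L, v ⬝ᵥ gradX f x v = 0 := by
  have hfv := hf.contDiff_position v
  have hflux : IsC1SpatialVF L fun x => f x v • v :=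
    { contDiff := hfv.smul contDiff_const
      periodic := fun i x => by simp only [hf.periodic v i x] }
  rw [← setIntegral_box_divergence hL hflux]
  congr with x : 1
  rw [divergence_smul (hfv.differentiable one_ne_zero x) (differentiableAt_const v),
    divergence_const, mul_zero, zero_add, dotProduct_comm]
  rfl

theorem continuous_energyTransport (hf : IsC1Phase L f) :
    Continuous (Function.uncurry (energyTransport f)) :=
  (continuous_snd.dotProduct hf.continuous_gradX).mul (continuous_snd.dotProduct continuous_snd)

theorem exists_isCompact_energyTransport (hf : IsC1Phase L f) :
    ∃ K, IsCompact K ∧ ∀ x, ∀ v ∉ K, energyTransport f x v = 0 := by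
  obtain ⟨K, hK, hfK⟩ := hf.exists_isCompact
  refine ⟨K, hK, fun x v hv => ?_⟩
  have hgrad : gradX f x v = 0 := by
    ext i
    simp [gradX, hfK _ v hv]
  rw [energyTransport, hgrad, dotProduct_zero, zero_mul]

theorem integrable_energyTransport (hf : IsC1Phase L f) (x : V3) :
    Integrable (energyTransport f x) := by
  obtain ⟨K, hK, hfK⟩ := hf.exists_isCompact_energyTransport
  exact hf.continuous_energyTransport.uncurry_left x |>.integrable_of_hasCompactSupport
    (HasCompactSupport.intro hK (hfK x))

theorem continuous_integral_energyTransport (hf : IsC1Phase L f) :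
    Continuous fun x => ∫ v, energyTransport f x v := by
  obtain ⟨K, hK, hfK⟩ := hf.exists_isCompact_energyTransport
  exact continuous_integral_of_support_subset_isCompact hf.continuous_energyTransport hK hfK

theorem setIntegral_box_integral_energyTransport (hf : IsC1Phase L f) (hL : 0 ≤ L) :
    ∫ x in box L, ∫ v, energyTransport f x v = 0 := by
  obtain ⟨K, hK, hfK⟩ := hf.exists_isCompact_energyTransport
  have hbox : IsCompact (box L) := isCompact_Icc
  rw [setIntegral_integral_swap_of_support_subset_isCompact hf.continuous_energyTransport hbox
    hK hfK]
  simp only [energyTransport, integral_mul_const, hf.setIntegral_box_dotProduct_gradX hL, zero_mul,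
    integral_zero]

theorem setIntegral_box_integral_vlasov_mul (hf : IsC1Phase L f) (hL : 0 ≤ L) {E : V3 → V3}
    (hE : Continuous E) (B : V3 → V3) :
    ∫ x in box L, ∫ v, (v ⬝ᵥ gradX f x v + (E x + v ⨯₃ B x) ⬝ᵥ gradV f x v) * (v ⬝ᵥ v)
      = -2 * ∫ x in box L, E x ⬝ᵥ Jcur f x := by
  have velocity_integral (x : V3) :
      ∫ v, (v ⬝ᵥ gradX f x v + (E x + v ⨯₃ B x) ⬝ᵥ gradV f x v) * (v ⬝ᵥ v)
        = (∫ v, energyTransport f x v) + -2 * (E x ⬝ᵥ Jcur f x) := by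
    have hg := hf.contDiff_velocity x
    have hs := hf.hasCompactSupport_velocity x
    simp only [add_mul]
    rw [Jcur, ← integral_add_cross_dotProduct_grad_mul_dotProduct_self hg hs (E x) (B x)]
    exact integral_add (hf.integrable_energyTransport x)
      (integrable_add_cross_dotProduct_grad_mul_dotProduct_self hg hs (E x) (B x))
  simp only [velocity_integral]
  rw [integral_add (integrableOn_box hf.continuous_integral_energyTransport L)
      ((integrableOn_box (hE.dotProduct hf.continuous_Jcur) L).const_mul _),
    hf.setIntegral_box_integral_energyTransport hL, integral_const_mul, zero_add]

end IsC1Phase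

theorem kinE_sub_of_vlasov {L Δt : ℝ} (hL : 0 ≤ L) (hΔt : Δt ≠ 0) {f0 f1 : V3 → V3 → ℝ}
    {E B : V3 → V3} (hf0 : IsC1Phase L f0) (hf1 : IsC1Phase L f1) (hE : Continuous E)
    (hVlasov : ∀ x v,
      (f1 x v - f0 x v) / Δt + v ⬝ᵥ gradX (fun y w => (f0 y w + f1 y w) / 2) x v
        + (E x + v ⨯₃ B x) ⬝ᵥ gradV (fun y w => (f0 y w + f1 y w) / 2) x v = 0) :
    kinE L f1 - kinE L f0 = Δt * ∫ x in box L, E x ⬝ᵥ (Jcur f0 x + Jcur f1 x) := by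
  set g : V3 → V3 → ℝ := fun x v => (f0 x v + f1 x v) / 2
  have increment (x v : V3) :
      f1 x v - f0 x v = -Δt * (v ⬝ᵥ gradX g x v + (E x + v ⨯₃ B x) ⬝ᵥ gradV g x v) := by
    linear_combination Δt * hVlasov x v - mul_div_cancel₀ (f1 x v - f0 x v) hΔt
  rw [hf0.kinE_sub hf1]
  simp only [increment, mul_assoc, integral_const_mul]
  rw [(hf0.midpoint hf1).setIntegral_box_integral_vlasov_mul hL hE B]
  simp only [hf0.Jcur_midpoint hf1, dotProduct_smul, smul_eq_mul, integral_const_mul]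
  ring

end VlasovStep

section SmoothData

variable {L : ℝ}

theorem IsSpatialVF.isC1SpatialVF {U : V3 → V3} (hU : IsSpatialVF L U) : IsC1SpatialVF L U where
  contDiff := hU.1.of_le (by exact_mod_cast le_top)
  periodic i x := by simpa only [← Pi.single_smul, smul_eq_mul, mul_one] using hU.2 x i

theorem IsPhase.isC1Phase {f : V3 → V3 → ℝ} (hf : IsPhase L f) : IsC1Phase L f where
  contDiff := hf.1.of_le (by exact_mod_cast le_top)
  periodic v i x := by simpa only [← Pi.single_smul, smul_eq_mul, mul_one] using hf.2.1 x v i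
  exists_isCompact := by
    obtain ⟨R, hR⟩ := hf.2.2
    refine ⟨Metric.closedBall 0 R, isCompact_closedBall 0 R, fun x v hv => hR x v ?_⟩
    rw [mem_closedBall_zero_iff, not_le] at hv
    exact hv.le

end SmoothData

theorem scheme3_modified_energy_conservation_general {L Δt : ℝ} (hL : 0 < L) (hΔt : Δt ≠ 0)
    {f0 f1 : V3 → V3 → ℝ} {Em En Eh E1 Et Bn B1 : V3 → V3}
    (hf0 : IsC1Phase L f0) (hf1 : IsC1Phase L f1) (hEh : IsC1SpatialVF L Eh)
    (hBn : IsC1SpatialVF L Bn) (hB1 : IsC1SpatialVF L B1)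
    (hEn' : ∀ x, En x = Em x + (Δt / 2) • (curl Bn x - Jcur f0 x))
    (hEh' : ∀ x, Eh x = En x + (Δt / 2) • (curl Bn x - Jcur f0 x))
    (hB1' : ∀ x, B1 x = Bn x - Δt • curl Eh x)
    (hVlasov : ∀ x v,
      (f1 x v - f0 x v) / Δt
        + v ⬝ᵥ gradX (fun y w => (f0 y w + f1 y w) / 2) x v
        + (Eh x + v ⨯₃ ((2 : ℝ)⁻¹ • (Bn x + B1 x)))
            ⬝ᵥ gradV (fun y w => (f0 y w + f1 y w) / 2) x v = 0)
    (hE1' : ∀ x, E1 x = Eh x + (Δt / 2) • (curl B1 x - Jcur f1 x))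
    (hEt' : ∀ x, Et x = E1 x + (Δt / 2) • (curl B1 x - Jcur f1 x)) :
    kinE L f1 + ∫ x in box L, (B1 x ⬝ᵥ B1 x + Eh x ⬝ᵥ Et x)
      = kinE L f0 + ∫ x in box L, (Bn x ⬝ᵥ Bn x + Em x ⬝ᵥ Eh x) := by
  have ampere0 (x : V3) : Eh x = Em x + Δt • (curl Bn x - Jcur f0 x) := by
    rw [hEh', hEn']; module
  have ampere1 (x : V3) : Et x = Eh x + Δt • (curl B1 x - Jcur f1 x) := by
    rw [hEt', hE1']; module
  have kinetic := kinE_sub_of_vlasov (B := fun x => (2 : ℝ)⁻¹ • (Bn x + B1 x)) hL.le hΔt hf0 hf1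
    hEh.contDiff.continuous hVlasov
  have field := leapfrog_fieldEnergy_balance hL.le Δt hEh hBn hB1 hf0.continuous_Jcur
    hf1.continuous_Jcur ampere0 hB1' ampere1
  linear_combination kinetic + field

/-- Modified energy conservation of Scheme-3 (Theorem 2.1, case Scheme-3).
`Em, Eh, Et` stand for `E^{n-1/2}, E^{n+1/2}, E^{n+3/2}`. -/
theorem scheme3_modified_energy_conservation
    (L Δt : ℝ) (hL : 0 < L) (hΔt : 0 < Δt)
    (f0 f1 : V3 → V3 → ℝ) (Em En Eh E1 Et Bn B1 : V3 → V3)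
    (hf0 : IsPhase L f0) (hf1 : IsPhase L f1)
    (hEm : IsSpatialVF L Em) (hEn : IsSpatialVF L En) (hEh : IsSpatialVF L Eh)
    (hE1 : IsSpatialVF L E1) (hEt : IsSpatialVF L Et)
    (hBn : IsSpatialVF L Bn) (hB1 : IsSpatialVF L B1)
    (hEn' : ∀ x : V3, En x = Em x + (Δt / 2) • (curl Bn x - Jcur f0 x))
    (hEh' : ∀ x : V3, Eh x = En x + (Δt / 2) • (curl Bn x - Jcur f0 x))
    (hB1' : ∀ x : V3, B1 x = Bn x - Δt • curl Eh x)
    (hVlasov : ∀ x v : V3,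
      (f1 x v - f0 x v) / Δt
        + v ⬝ᵥ gradX (fun y w => (f0 y w + f1 y w) / 2) x v
        + (Eh x + crossProduct v ((2:ℝ)⁻¹ • (Bn x + B1 x)))
            ⬝ᵥ gradV (fun y w => (f0 y w + f1 y w) / 2) x v = 0)
    (hE1' : ∀ x : V3, E1 x = Eh x + (Δt / 2) • (curl B1 x - Jcur f1 x))
    (hEt' : ∀ x : V3, Et x = E1 x + (Δt / 2) • (curl B1 x - Jcur f1 x)) :
    kinE L f1 + ∫ x in box L, (B1 x ⬝ᵥ B1 x + Eh x ⬝ᵥ Et x)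
      = kinE L f0 + ∫ x in box L, (Bn x ⬝ᵥ Bn x + Em x ⬝ᵥ Eh x) :=
  scheme3_modified_energy_conservation_general hL hΔt.ne' hf0.isC1Phase hf1.isC1Phase
    hEh.isC1SpatialVF hBn.isC1SpatialVF hB1.isC1SpatialVF hEn' hEh' hB1' hVlasov hE1' hEt'
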